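/- arXiv:2404.01788 — 2 statements merged into one kernel-verified Lean document; each statement's English description precedes it below -/
import Mathlib

section
/- For every positive integer n, ∑_{π ∈ 𝔖_n} q^{depth(π)} t^{exc(π)} = ∑_{π ∈ 𝔖_n} q^{drp(π)} t^{des(π)} as polynomials in the two variables q and t over the integers. -/
open Finset

/-- The one-line notation value of `π` at position `k ∈ {1,…,n}`:
`oneLine π k = π(k)` with `1`-indexed positions and values. -/
def oneLine {n : ℕ} (π : Equiv.Perm (Fin n)) (k : ℕ) : ℕ :=
  if h : k - 1 < n then ((π ⟨k - 1, h⟩ : Fin n) : ℕ) + 1 else k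

/-- `SUC(π) = {i ∈ {1,…,n-1} : π(i+1) = π(i)+1}` (position set). -/
def SUC {n : ℕ} (π : Equiv.Perm (Fin n)) : Finset ℕ :=
  (Finset.Icc 1 (n - 1)).filter (fun i => oneLine π (i + 1) = oneLine π i + 1)

/-- `FIX(π) = {i ∈ {1,…,n-1} : π(i) = i}` (position set). -/
def FIX {n : ℕ} (π : Equiv.Perm (Fin n)) : Finset ℕ :=
  (Finset.Icc 1 (n - 1)).filter (fun i => oneLine π i = i)

/-- `Asc₂(π) = {π(i+1) : i ∈ {1,…,n-1}, π(i+1) ≥ π(i)+2}` (value set). -/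
def Asc2 {n : ℕ} (π : Equiv.Perm (Fin n)) : Finset ℕ :=
  ((Finset.Icc 1 (n - 1)).filter (fun i => oneLine π i + 2 ≤ oneLine π (i + 1))).image
    (fun i => oneLine π (i + 1))

/-- `Des(π) = {π(i+1) : i ∈ {1,…,n-1}, π(i) > π(i+1)}` (value set). -/
def DesSet {n : ℕ} (π : Equiv.Perm (Fin n)) : Finset ℕ :=
  ((Finset.Icc 1 (n - 1)).filter (fun i => oneLine π (i + 1) < oneLine π i)).image
    (fun i => oneLine π (i + 1))

/-- `Suc(π) = {π(i+1) : i ∈ {1,…,n-1}, π(i+1) = π(i)+1}` (value set). -/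
def SucSet {n : ℕ} (π : Equiv.Perm (Fin n)) : Finset ℕ :=
  ((Finset.Icc 1 (n - 1)).filter (fun i => oneLine π (i + 1) = oneLine π i + 1)).image
    (fun i => oneLine π (i + 1))

/-- `Aexc(π) = {π(i) : i ∈ {2,…,n}, π(i) < i}` (value set). -/
def Aexc {n : ℕ} (π : Equiv.Perm (Fin n)) : Finset ℕ :=
  ((Finset.Icc 2 n).filter (fun i => oneLine π i < i)).image (fun i => oneLine π i)

/-- `Êxc(π) = {π(i) : i ∈ {2,…,n}, π(i) > i}` (value set). -/
def ExcHat {n : ℕ} (π : Equiv.Perm (Fin n)) : Finset ℕ :=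
  ((Finset.Icc 2 n).filter (fun i => i < oneLine π i)).image (fun i => oneLine π i)

/-- `F̂ix(π) = {π(i) : i ∈ {2,…,n}, π(i) = i}` (value set). -/
def FixHat {n : ℕ} (π : Equiv.Perm (Fin n)) : Finset ℕ :=
  ((Finset.Icc 2 n).filter (fun i => oneLine π i = i)).image (fun i => oneLine π i)

/-- `depth(π) = ∑_{i : π(i) > i} (π(i) − i)`. -/
def depthStat {n : ℕ} (π : Equiv.Perm (Fin n)) : ℕ :=
  ∑ i ∈ (Finset.Icc 1 n).filter (fun i => i < oneLine π i), (oneLine π i - i)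

/-- `drp(π) = ∑_{i ∈ {1,…,n-1} : π(i) > π(i+1)} (π(i) − π(i+1))`. -/
def drpStat {n : ℕ} (π : Equiv.Perm (Fin n)) : ℕ :=
  ∑ i ∈ (Finset.Icc 1 (n - 1)).filter (fun i => oneLine π (i + 1) < oneLine π i),
    (oneLine π i - oneLine π (i + 1))

/-- `exc(π) = |{i ∈ {1,…,n} : π(i) > i}|`. -/
def excNum {n : ℕ} (π : Equiv.Perm (Fin n)) : ℕ :=
  ((Finset.Icc 1 n).filter (fun i => i < oneLine π i)).card

/-- `nexc(π) = |{i ∈ {1,…,n} : π(i) < i}|`. -/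
def nexcNum {n : ℕ} (π : Equiv.Perm (Fin n)) : ℕ :=
  ((Finset.Icc 1 n).filter (fun i => oneLine π i < i)).card

/-- `des(π) = |{i ∈ {1,…,n-1} : π(i) > π(i+1)}|`. -/
def desNum {n : ℕ} (π : Equiv.Perm (Fin n)) : ℕ :=
  ((Finset.Icc 1 (n - 1)).filter (fun i => oneLine π (i + 1) < oneLine π i)).card

/-- `asc(π) = |{i ∈ {1,…,n-1} : π(i) < π(i+1)}|`. -/
def ascNum {n : ℕ} (π : Equiv.Perm (Fin n)) : ℕ :=
  ((Finset.Icc 1 (n - 1)).filter (fun i => oneLine π i < oneLine π (i + 1))).card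

/-- `inv(π) = |{(i,j) : 1 ≤ i < j ≤ n, π(i) > π(j)}|`. -/
def invNum {n : ℕ} (π : Equiv.Perm (Fin n)) : ℕ :=
  (((Finset.Icc 1 n) ×ˢ (Finset.Icc 1 n)).filter
    (fun p : ℕ × ℕ => p.1 < p.2 ∧ oneLine π p.2 < oneLine π p.1)).card

/-! Write every cycle of `π` starting at its maximum and passing from each letter `v` to `π⁻¹(v)`,
and concatenate the cycles by increasing maximum. Inside a cycle each `v` is followed by `π⁻¹(v)`,
so the word drops at `v` exactly when `v` is an excedance value, and by the same amount. The last
letter of a cycle is the image of its maximum, hence not an excedance value, and the word does not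
drop there either because the next cycle has a larger maximum. Hence this bijection matches drops
with excesses letter by letter. Placing the smallest letter last turns this into an induction:
deleting it has the same effect on the drops and on the excesses. -/

open Equiv Equiv.Perm

lemma orderSucc_succAbove_of_ne {n : ℕ} {i : Fin (n + 1)} {j : Fin n} (h : i ≠ j.succ) :
    Order.succ (i.succAbove j) = i.succAbove (Order.succ j) := by
  cases n with
  | zero => exact j.elim0
  | succ m =>
    induction j using Fin.lastCases with
    | last =>
      rw [Fin.orderSucc_last, Fin.succAbove_ne_last_last h, Fin.orderSucc_last]
    | cast j =>
      rw [Fin.orderSucc_castSucc]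
      obtain hij | hji := lt_or_gt_of_ne h
      · have hij' : i < j.succ.succ := hij.trans (Fin.succ_lt_succ_iff.2 j.castSucc_lt_succ)
        rw [Fin.succAbove_of_lt_succ _ _ hij, Fin.succAbove_of_lt_succ _ _ hij', Fin.succ_castSucc,
          Fin.orderSucc_castSucc]
      · rw [Fin.succAbove_of_succ_le _ _ hji.le, Fin.orderSucc_castSucc,
          Fin.succAbove_of_castSucc_lt _ _ (by rwa [← Fin.succ_castSucc]), Fin.succ_castSucc]

section Word

variable {n : ℕ}

/-- The permutation whose one-line word is that of `σ` with every letter raised by one, preceded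
by the new smallest letter. -/
def prependZero (σ : Perm (Fin n)) : Perm (Fin (n + 1)) :=
  decomposeFin.symm (0, σ)

@[simp]
lemma prependZero_zero (σ : Perm (Fin n)) : prependZero σ 0 = 0 :=
  decomposeFin_symm_apply_zero 0 σ

@[simp]
lemma prependZero_succ (σ : Perm (Fin n)) (j : Fin n) : prependZero σ j.succ = (σ j).succ := by
  simp [prependZero]

lemma prependZero_injective : Function.Injective (prependZero (n := n)) := fun _ _ h =>
  congrArg Prod.snd (decomposeFin.symm.injective h)

/-- The permutation whose one-line word is that of `σ` with every letter raised by one and the new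
smallest letter inserted at position `i`. -/
def insertZero (σ : Perm (Fin n)) (i : Fin (n + 1)) : Perm (Fin (n + 1)) :=
  prependZero σ * i.cycleRange

@[simp]
lemma insertZero_self (σ : Perm (Fin n)) (i : Fin (n + 1)) : insertZero σ i i = 0 := by
  simp [insertZero]

@[simp]
lemma insertZero_succAbove (σ : Perm (Fin n)) (i : Fin (n + 1)) (j : Fin n) :
    insertZero σ i (i.succAbove j) = (σ j).succ := by
  simp [insertZero]

lemma insertZero_bijective :
    Function.Bijective fun x : Perm (Fin n) × Fin (n + 1) => insertZero x.1 x.2 := by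
  refine (Fintype.bijective_iff_injective_and_card _).2
    ⟨?_, Fintype.card_congr ((prodComm _ _).trans decomposeFin.symm)⟩
  rintro ⟨σ, i⟩ ⟨τ, k⟩ (h : insertZero σ i = insertZero τ k)
  obtain rfl : i = k := (insertZero τ k).injective <| by
    rw [insertZero_self, ← h, insertZero_self]
  rw [prependZero_injective (mul_right_cancel h)]

end Word

section Profiles

variable {n : ℕ}

/-- The excess `v - π⁻¹(v)` with which `π` hits the value `v`; truncated subtraction makes it
nonzero exactly at the excedance values. -/
def excessTo (π : Perm (Fin n)) (v : Fin n) : ℕ := (v : ℕ) - π.symm v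

/-- The drop from the letter `v` of the one-line word of `π` to the letter following it, truncated
at zero. The last letter has drop zero because `Order.succ` fixes the last position. -/
def dropFrom (π : Perm (Fin n)) (v : Fin n) : ℕ := (v : ℕ) - π (Order.succ (π.symm v))

lemma excessTo_apply (π : Perm (Fin n)) (i : Fin n) : excessTo π (π i) = (π i : ℕ) - i := by
  simp [excessTo]

lemma dropFrom_apply (π : Perm (Fin n)) (i : Fin n) :
    dropFrom π (π i) = (π i : ℕ) - π (Order.succ i) := by
  simp [dropFrom]

/-- The common recursion of `excessTo` and `dropFrom`: the letters are raised by one and a new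
smallest letter `0` is placed after `p`, the choice `p = 0` meaning after no letter. -/
def extendProfile (p : Fin (n + 1)) (d : Fin n → ℕ) : Fin (n + 1) → ℕ :=
  Function.update (Fin.cons 0 d : Fin (n + 1) → ℕ) p p

lemma extendProfile_self (p : Fin (n + 1)) (d : Fin n → ℕ) : extendProfile p d p = p :=
  Function.update_self ..

lemma extendProfile_zero (p : Fin (n + 1)) (d : Fin n → ℕ) : extendProfile p d 0 = 0 := by
  obtain rfl | hp := eq_or_ne p 0
  · exact extendProfile_self ..
  · simp [extendProfile, Function.update_of_ne hp.symm]

lemma extendProfile_succ_of_ne {p : Fin (n + 1)} {v : Fin n} (h : v.succ ≠ p) (d : Fin n → ℕ) :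
    extendProfile p d v.succ = d v := by
  simp [extendProfile, Function.update_of_ne h]

lemma excessTo_decomposeFin_symm (p : Fin (n + 1)) (σ : Perm (Fin n)) :
    excessTo (decomposeFin.symm (p, σ)) = extendProfile p (excessTo σ) := by
  funext v
  obtain ⟨i, rfl⟩ := (decomposeFin.symm (p, σ)).surjective v
  rw [excessTo_apply]
  cases i using Fin.cases with
  | zero => simp [extendProfile_self]
  | succ j =>
    rw [decomposeFin_symm_apply_succ]
    by_cases h : (σ j).succ = p
    · simp [h, extendProfile_zero]
    · rw [swap_apply_of_ne_of_ne (Fin.succ_ne_zero _) h, extendProfile_succ_of_ne h, excessTo_apply,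
        Fin.val_succ, Fin.val_succ, Nat.add_sub_add_right]

lemma dropFrom_insertZero (σ : Perm (Fin n)) (i : Fin (n + 1)) :
    dropFrom (insertZero σ i) = extendProfile (prependZero σ i) (dropFrom σ) := by
  funext v
  obtain ⟨k, rfl⟩ := (insertZero σ i).surjective v
  rw [dropFrom_apply]
  obtain rfl | ⟨j, rfl⟩ := Fin.eq_self_or_eq_succAbove i k
  · simp [extendProfile_zero]
  · rw [insertZero_succAbove]
    by_cases h : i = j.succ
    · subst h
      rw [Fin.succAbove_succ_self, Fin.orderSucc_castSucc, insertZero_self, prependZero_succ,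
        extendProfile_self, Fin.val_zero, Nat.sub_zero]
    · have hσ : (σ j).succ ≠ prependZero σ i := by
        rw [← prependZero_succ]
        exact (prependZero σ).injective.ne (Ne.symm h)
      rw [orderSucc_succAbove_of_ne h, insertZero_succAbove, extendProfile_succ_of_ne hσ,
        dropFrom_apply, Fin.val_succ, Fin.val_succ, Nat.add_sub_add_right]

end Profiles

/-- Foata's fundamental transformation. The one-line word of `foata n π` lists the cycles of `π` by
increasing maximum, each cycle starting at its maximum and passing from `v` to `π⁻¹(v)`. It is
built by recursion: the smallest letter goes right after its image under `π`, or to the front of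
the word if it is a fixed point. -/
noncomputable def foata : ∀ n : ℕ, Perm (Fin n) ≃ Perm (Fin n)
  | 0 => Equiv.refl _
  | n + 1 =>
    decomposeFin.trans <| (prodComm _ _).trans <|
      ((foata n).prodShear fun σ => (prependZero (foata n σ)).symm).trans <|
        Equiv.ofBijective _ insertZero_bijective

lemma foata_decomposeFin_symm {n : ℕ} (p : Fin (n + 1)) (σ : Perm (Fin n)) :
    foata (n + 1) (decomposeFin.symm (p, σ)) =
      insertZero (foata n σ) ((prependZero (foata n σ)).symm p) := by
  simp [foata]

theorem dropFrom_foata {n : ℕ} (π : Perm (Fin n)) : dropFrom (foata n π) = excessTo π := by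
  induction n with
  | zero => exact Subsingleton.elim _ _
  | succ n ih =>
    obtain ⟨⟨p, σ⟩, rfl⟩ := decomposeFin.symm.surjective π
    rw [foata_decomposeFin_symm, dropFrom_insertZero, apply_symm_apply, ih,
      excessTo_decomposeFin_symm]

section Statistics

variable {n : ℕ} {M : Type*} [AddCommMonoid M]

lemma oneLine_succ (π : Perm (Fin n)) (i : Fin n) : oneLine π (i + 1) = π i + 1 := by
  simp [oneLine]

lemma sum_Icc_one_eq_sum_fin (f : ℕ → M) (n : ℕ) :
    ∑ i ∈ Icc 1 n, f i = ∑ i : Fin n, f (i + 1) := by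
  rw [Fin.sum_univ_eq_sum_range (fun i => f (i + 1)), Finset.range_eq_Ico,
    Finset.sum_Ico_add' f 0 n 1, zero_add, Finset.Ico_add_one_right_eq_Icc]

lemma sum_excedances (π : Perm (Fin n)) (f : ℕ → M) :
    ∑ i ∈ Icc 1 n with i < oneLine π i, f (oneLine π i - i) =
      ∑ v with 0 < excessTo π v, f (excessTo π v) := by
  rw [sum_filter, sum_filter, sum_Icc_one_eq_sum_fin]
  refine Fintype.sum_equiv π _ _ fun i => ?_
  simp only [oneLine_succ, excessTo_apply, add_lt_add_iff_right, Nat.add_sub_add_right,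
    tsub_pos_iff_lt]

lemma sum_descents (π : Perm (Fin n)) (f : ℕ → M) :
    ∑ i ∈ Icc 1 (n - 1) with oneLine π (i + 1) < oneLine π i, f (oneLine π i - oneLine π (i + 1)) =
      ∑ v with 0 < dropFrom π v, f (dropFrom π v) := by
  cases n with
  | zero => simp
  | succ m =>
    have oneLine_castSucc (i : Fin m) : oneLine π (i + 1) = π i.castSucc + 1 :=
      oneLine_succ π i.castSucc
    have oneLine_succ_succ (i : Fin m) : oneLine π (i + 1 + 1) = π i.succ + 1 :=
      oneLine_succ π i.succ
    rw [sum_filter, sum_filter, Nat.add_sub_cancel, sum_Icc_one_eq_sum_fin, ← Equiv.sum_comp π,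
      Fin.sum_univ_castSucc]
    simp only [oneLine_castSucc, oneLine_succ_succ, dropFrom_apply, Fin.orderSucc_castSucc,
      Fin.orderSucc_last, add_lt_add_iff_right, Nat.add_sub_add_right, tsub_pos_iff_lt,
      lt_self_iff_false, if_false, add_zero]

theorem drpStat_foata (π : Perm (Fin n)) : drpStat (foata n π) = depthStat π := by
  rw [drpStat, depthStat, sum_descents _ fun d => d, sum_excedances _ fun d => d, dropFrom_foata]

theorem desNum_foata (π : Perm (Fin n)) : desNum (foata n π) = excNum π := by
  rw [desNum, excNum, card_eq_sum_ones, card_eq_sum_ones, sum_descents _ fun _ => 1,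
    sum_excedances _ fun _ => 1, dropFrom_foata]

end Statistics

/-- ∑ q^{depth(π)} t^{exc(π)} = ∑ q^{drp(π)} t^{des(π)}
as polynomials in two variables over ℤ. -/
theorem stmt5 (n : ℕ) (hn : 0 < n) :
    (∑ π : Equiv.Perm (Fin n),
        (MvPolynomial.X 0 : MvPolynomial (Fin 2) ℤ) ^ depthStat π *
          MvPolynomial.X 1 ^ excNum π) =
      ∑ π : Equiv.Perm (Fin n),
        (MvPolynomial.X 0 : MvPolynomial (Fin 2) ℤ) ^ drpStat π *
          MvPolynomial.X 1 ^ desNum π := by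
  refine Fintype.sum_equiv (foata n) _ _ fun π => ?_
  rw [drpStat_foata, desNum_foata]
end

section
/- For every positive integer n, let A₁ be the set of permutations w of {1,...,n} with w(1) = 1. Then there exists a bijection Ψ₁ from A₁ to A₁ such that for every w ∈ A₁, sign(Ψ₁(w)) = sign(w) and depth(w) = drp(Ψ₁(w)). -/
open Finset

/-
Write positions and values from `0`. The statistic `depth` is determined by the multiset of maxima
`max(i, w(i))`, and `drp` by the multiset of maxima of adjacent letters of the word
`0, w(0), w(1), …`. These two multisets are jointly equidistributed with the sign over all
permutations, for two reasons.

* Forgetting signs: let `N` be a new largest element. Inserting it into a cycle (or as a fixed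
  point) changes the first multiset, and inserting it into the word changes the second one, in the
  same ways: either `N` is added, or one element is replaced by `N, N`.
* Counting with signs: exchanging the values `0` and `1` reverses the sign and changes neither
  multiset unless `w(0) ∈ {0, 1}`. The surviving permutations give the same recursion for both.

Putting a new fixed point in front transports the equidistribution to the permutations fixing the
first element.
-/

section Equidistribution

variable {α β γ δ : Type*} [Fintype α]

lemma count_map_univ [DecidableEq β] (a : α → β) (y : β) :
    (univ.val.map a).count y = #{x | a x = y} := by
  simp only [Multiset.count_map, eq_comm (a := y)]
  rfl

lemma exists_perm_forall_eq_of_map_univ_eq {a b : α → β}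
    (h : univ.val.map a = univ.val.map b) : ∃ σ : Equiv.Perm α, ∀ x, b (σ x) = a x := by
  let _ := Classical.decEq β
  have hfiber (y : β) : Nonempty ({x // a x = y} ≃ {x // b x = y}) := by
    refine ⟨Fintype.equivOfCardEq ?_⟩
    rw [Fintype.card_subtype, Fintype.card_subtype, ← count_map_univ, h, count_map_univ]
  let E (y : β) := (hfiber y).some
  exact ⟨(Equiv.sigmaFiberEquiv a).symm.trans
    ((Equiv.sigmaCongrRight E).trans (Equiv.sigmaFiberEquiv b)), fun x => (E (a x) ⟨x, rfl⟩).2⟩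

lemma two_mul_card_filter_prodMk_eq [DecidableEq β] (a : α → β) (s : α → ℤˣ) (y : β) (t : ℤˣ) :
    2 * (#{x | (a x, s x) = (y, t)} : ℤ) =
      #{x | a x = y} + t • ∑ x, s x • if a x = y then (1 : ℤ) else 0 := by
  rw [card_filter, card_filter, Nat.cast_sum, Nat.cast_sum, mul_sum, smul_sum, ← sum_add_distrib]
  refine sum_congr rfl fun x _ => ?_
  rcases Int.units_eq_one_or (s x) with hs | hs <;> rcases Int.units_eq_one_or t with ht | ht <;>
    by_cases ha : a x = y <;> simp [hs, ht, ha]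

lemma map_univ_prodMk_eq {a b : α → β} (s : α → ℤˣ) (h : univ.val.map a = univ.val.map b)
    (hs : ∀ f : β → ℤ, ∑ x, s x • f (a x) = ∑ x, s x • f (b x)) :
    univ.val.map (fun x => (a x, s x)) = univ.val.map fun x => (b x, s x) := by
  let _ := Classical.decEq β
  ext ⟨y, t⟩
  have hcard : #{x | a x = y} = #{x | b x = y} := by
    rw [← count_map_univ, h, count_map_univ]
  have htwo : 2 * (#{x | (a x, s x) = (y, t)} : ℤ) = 2 * #{x | (b x, s x) = (y, t)} := by
    rw [two_mul_card_filter_prodMk_eq, two_mul_card_filter_prodMk_eq, hcard,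
      hs fun z => if z = y then 1 else 0]
  rw [count_map_univ, count_map_univ]
  omega

lemma map_univ_eq_bind_of_equiv [Fintype β] [Fintype γ] (E : α × β ≃ γ) (g : γ → δ) :
    univ.val.map g = univ.val.bind fun x => univ.val.map fun y => g (E (x, y)) := by
  rw [← Multiset.map_univ_val_equiv E, ← univ_product_univ, product_val, Multiset.map_map]
  simp only [SProd.sprod, Multiset.product, Multiset.map_bind, Multiset.map_map,
    Function.comp_def]

lemma map_univ_update [DecidableEq α] [DecidableEq β] (g : α → β) (j : α) (b : β) :
    univ.val.map (Function.update g j b) = b ::ₘ (univ.val.map g).erase (g j) := by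
  have huniv : univ.val = j ::ₘ (univ.erase j).val := by
    rw [erase_val, Multiset.cons_erase (mem_univ_val j)]
  have hcongr : (univ.erase j).val.map (Function.update g j b) = (univ.erase j).val.map g :=
    Multiset.map_congr rfl fun i hi => Function.update_of_ne (ne_of_mem_erase hi) b g
  rw [huniv, Multiset.map_cons, Multiset.map_cons, Multiset.erase_cons_head, hcongr,
    Function.update_self]

end Equidistribution

lemma map_univ_fin_succ {m : ℕ} {β : Type*} (g : Fin (m + 1) → β) :
    univ.val.map g = g 0 ::ₘ univ.val.map fun i : Fin m => g i.succ := by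
  simp only [Fin.univ_val_map, List.ofFn_succ, Multiset.cons_coe]

lemma map_univ_fin_castSucc {m : ℕ} {β : Type*} (g : Fin (m + 1) → β) :
    univ.val.map g = g (Fin.last m) ::ₘ univ.val.map fun i : Fin m => g i.castSucc := by
  rw [Fin.univ_castSuccEmb, cons_val, Multiset.map_cons, map_val, Multiset.map_map]
  rfl

section FixZero

open Equiv Equiv.Perm

variable {m : ℕ}

/-- The permutation of `Fin (m + 1)` that fixes `0` and acts as `e` on the successors: its word is
that of `e` shifted up by one and preceded by the least letter. -/
def fixZero (e : Perm (Fin m)) : Perm (Fin (m + 1)) := decomposeFin.symm (0, e)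

@[simp] lemma fixZero_zero (e : Perm (Fin m)) : fixZero e 0 = 0 := by
  simp [fixZero]

@[simp] lemma fixZero_succ (e : Perm (Fin m)) (i : Fin m) : fixZero e i.succ = (e i).succ := by
  simp [fixZero]

@[simp] lemma sign_fixZero (e : Perm (Fin m)) : sign (fixZero e) = sign e := by
  simp [fixZero]

/-- Permutations of `Fin m` as the permutations of `Fin (m + 1)` fixing `0`. -/
noncomputable def fixZeroEquiv : Perm (Fin m) ≃ {w : Perm (Fin (m + 1)) // w 0 = 0} :=
  Equiv.ofBijective (fun e => ⟨fixZero e, fixZero_zero e⟩) <| by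
    refine ⟨fun a b h => ?_, fun ⟨w, hw⟩ => ?_⟩
    · simpa [fixZero] using h
    · obtain ⟨⟨p, e⟩, rfl⟩ := decomposeFin.symm.surjective w
      obtain rfl : p = 0 := by simpa using hw
      exact ⟨e, rfl⟩

lemma sum_filter_apply_zero_eq_zero {A : Type*} [AddCommMonoid A] (F : Perm (Fin (m + 1)) → A) :
    ∑ w with w 0 = 0, F w = ∑ e, F (fixZero e) := by
  rw [sum_subtype (p := fun w => w 0 = 0) _ (by simp) F, ← fixZeroEquiv.sum_comp]
  rfl

variable {A : Type*} [AddCommGroup A]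

lemma sum_sign_smul_eq_zero_of_one_lt (F : Perm (Fin (m + 2)) → A)
    (hF : ∀ w, 1 < w 0 → F (swap 0 1 * w) = F w) :
    ∑ w with 1 < w 0, sign w • F w = 0 := by
  have hpos (w : Perm (Fin (m + 2))) (hw : 1 < w 0) : swap 0 1 (w 0) = w 0 :=
    swap_apply_of_ne_of_ne (Fin.zero_lt_one.trans hw).ne' hw.ne'
  refine sum_involution (fun w _ => swap 0 1 * w) (fun w hw => ?_) (fun w _ _ => ?_)
    (fun w hw => ?_) (fun w _ => swap_mul_self_mul 0 1 w)
  · simp [hF w (by simpa using hw)]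
  · simp
  · have hw : 1 < w 0 := by simpa using hw
    simpa [hpos w hw] using hw

lemma sum_sign_smul_filter_apply_zero_eq_one (F : Perm (Fin (m + 2)) → A) :
    ∑ w with w 0 = 1, sign w • F w = -∑ w with w 0 = 0, sign w • F (swap 0 1 * w) := by
  rw [← sum_neg_distrib]
  refine sum_equiv (Equiv.mulLeft (swap 0 1)) (fun w => ?_) (fun w _ => ?_)
  · simp [swap_apply_eq_iff]
  · simp

lemma sum_sign_smul_eq_sum_fixZero (F : Perm (Fin (m + 2)) → A)
    (hF : ∀ w, 1 < w 0 → F (swap 0 1 * w) = F w) :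
    ∑ w, sign w • F w =
      ∑ e : Perm (Fin (m + 1)), sign e • (F (fixZero e) - F (swap 0 1 * fixZero e)) := by
  have hsplit (w : Perm (Fin (m + 2))) : sign w • F w = (if w 0 = 0 then sign w • F w else 0) +
      (if w 0 = 1 then sign w • F w else 0) + if 1 < w 0 then sign w • F w else 0 := by
    have hcases : w 0 = 0 ∨ w 0 = 1 ∨ 1 < w 0 := by
      simp only [Fin.ext_iff, Fin.lt_def, Fin.val_zero, Fin.val_one]
      omega
    rcases hcases with h | h | h
    · simp [h]
    · simp [h]
    · simp [h, h.ne', (Fin.zero_lt_one.trans h).ne']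
  rw [sum_congr rfl fun w _ => hsplit w, sum_add_distrib, sum_add_distrib, ← sum_filter,
    ← sum_filter, ← sum_filter, sum_sign_smul_eq_zero_of_one_lt F hF,
    sum_sign_smul_filter_apply_zero_eq_one, add_zero, ← sub_eq_add_neg, ← sum_sub_distrib,
    sum_filter_apply_zero_eq_zero]
  simp only [sign_fixZero, smul_sub]

end FixZero

section Maxima

open Equiv Equiv.Perm

variable {m : ℕ}

/-- The multiset of maxima of adjacent letters of the word `u`. -/
def adjMax (u : Fin (m + 1) → ℕ) : Multiset ℕ :=
  univ.val.map fun i : Fin m => max (u i.castSucc) (u i.succ)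

/-- The multiset of maxima of adjacent letters of the word `0, w(0), …, w(m - 1)`, whose sum
encodes `drp`. The smallest letter of `w` is itself `0`, so the initial `0` records the first letter
of `w`. -/
def wordMax (w : Perm (Fin m)) : Multiset ℕ :=
  adjMax (Fin.cons 0 fun i => (w i : ℕ))

/-- The multiset of the maxima `max(i, w(i))`, whose sum encodes `depth`. -/
def graphMax (w : Perm (Fin m)) : Multiset ℕ :=
  univ.val.map fun i : Fin m => max (i : ℕ) (w i)

/-- The part of `graphMax w` coming from nonzero arguments. -/
def graphMaxTail (w : Perm (Fin (m + 1))) : Multiset ℕ :=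
  univ.val.map fun i : Fin m => max (i + 1 : ℕ) (w i.succ)

lemma adjMax_cons_cons (a b : ℕ) (u : Fin m → ℕ) :
    adjMax (Fin.cons a (Fin.cons b u : Fin (m + 1) → ℕ)) = max a b ::ₘ adjMax (Fin.cons b u) := by
  rw [adjMax, map_univ_fin_succ]
  rfl

lemma wordMax_eq_cons (w : Perm (Fin (m + 1))) :
    wordMax w = (w 0 : ℕ) ::ₘ adjMax fun i => (w i : ℕ) := by
  rw [wordMax, adjMax, map_univ_fin_succ]
  simp [adjMax, -Fin.univ_val_map]

lemma graphMax_eq_cons (w : Perm (Fin (m + 1))) :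
    graphMax w = (w 0 : ℕ) ::ₘ graphMaxTail w := by
  simp [graphMax, graphMaxTail, map_univ_fin_succ, -Fin.univ_val_map]

lemma adjMax_fixZero (e : Perm (Fin m)) :
    adjMax (fun i => (fixZero e i : ℕ)) = (wordMax e).map (· + 1) := by
  rw [wordMax, adjMax, adjMax, Multiset.map_map]
  refine Multiset.map_congr rfl fun i _ => ?_
  have hi : (fixZero e i.succ : ℕ) = e i + 1 := by simp
  cases m with
  | zero => exact i.elim0
  | succ m => cases i using Fin.cases <;> simp_all [Nat.add_max_add_right]

lemma graphMaxTail_fixZero (e : Perm (Fin m)) :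
    graphMaxTail (fixZero e) = (graphMax e).map (· + 1) := by
  simp [graphMaxTail, graphMax, -Fin.univ_val_map, Nat.add_max_add_right]

lemma wordMax_fixZero (e : Perm (Fin m)) :
    wordMax (fixZero e) = 0 ::ₘ (wordMax e).map (· + 1) := by
  rw [wordMax_eq_cons, adjMax_fixZero, fixZero_zero, Fin.val_zero]

lemma graphMax_fixZero (e : Perm (Fin m)) :
    graphMax (fixZero e) = 0 ::ₘ (graphMax e).map (· + 1) := by
  rw [graphMax_eq_cons, graphMaxTail_fixZero, fixZero_zero, Fin.val_zero]

lemma val_swap_zero_one (x : Fin (m + 2)) :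
    (swap 0 1 x).val = if x.val = 0 then 1 else if x.val = 1 then 0 else x.val := by
  rw [swap_apply_def]
  simp only [Fin.ext_iff, Fin.val_zero, Fin.val_one]
  split_ifs <;> rfl

lemma adjMax_swap_mul (w : Perm (Fin (m + 2))) :
    adjMax (fun i => ((swap 0 1 * w : Perm (Fin (m + 2))) i : ℕ)) = adjMax fun i => (w i : ℕ) := by
  refine Multiset.map_congr rfl fun i _ => ?_
  have hne : (w i.castSucc : ℕ) ≠ w i.succ :=
    Fin.val_injective.ne (w.injective.ne Fin.castSucc_lt_succ.ne)
  simp only [Perm.mul_apply, val_swap_zero_one]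
  split_ifs <;> omega

lemma graphMaxTail_swap_mul (w : Perm (Fin (m + 2))) :
    graphMaxTail (swap 0 1 * w) = graphMaxTail w := by
  refine Multiset.map_congr rfl fun i _ => ?_
  simp only [Perm.mul_apply, val_swap_zero_one]
  split_ifs <;> omega

variable {A : Type*} [AddCommGroup A]

lemma sum_sign_smul_comp_eq {T Q : Perm (Fin (m + 2)) → Multiset ℕ}
    {T' : Perm (Fin (m + 1)) → Multiset ℕ} (hT : ∀ w, T w = (w 0 : ℕ) ::ₘ Q w)
    (hQ_swap : ∀ w, Q (swap 0 1 * w) = Q w) (hQ_fix : ∀ e, Q (fixZero e) = (T' e).map (· + 1))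
    (f : Multiset ℕ → A) :
    ∑ w, sign w • f (T w) =
      ∑ e, sign e • (f (0 ::ₘ (T' e).map (· + 1)) - f (1 ::ₘ (T' e).map (· + 1))) := by
  rw [sum_sign_smul_eq_sum_fixZero (fun w => f (T w))]
  · simp [hT, hQ_swap, hQ_fix]
  · intro w hw
    have hfix : swap 0 1 (w 0) = w 0 :=
      swap_apply_of_ne_of_ne (Fin.zero_lt_one.trans hw).ne' hw.ne'
    simp only [hT, hQ_swap, Perm.mul_apply, hfix]

lemma sum_sign_smul_graphMax (m : ℕ) (f : Multiset ℕ → A) :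
    ∑ w : Perm (Fin m), sign w • f (graphMax w) = ∑ w : Perm (Fin m), sign w • f (wordMax w) := by
  match m with
  | 0 => simp [graphMax, wordMax, adjMax]
  | 1 => simp [graphMax, wordMax, adjMax]
  | m + 2 =>
    rw [sum_sign_smul_comp_eq graphMax_eq_cons graphMaxTail_swap_mul graphMaxTail_fixZero,
      sum_sign_smul_comp_eq wordMax_eq_cons adjMax_swap_mul adjMax_fixZero]
    exact sum_sign_smul_graphMax (m + 1)
      fun M => f (0 ::ₘ M.map (· + 1)) - f (1 ::ₘ M.map (· + 1))

end Maxima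

section Insertion

open Equiv Equiv.Perm

variable {m : ℕ}

/-- The multisets obtained from `M` either by adding `N` or by replacing one element by two copies
of `N`: the effect on the adjacent maxima of a word of inserting a letter `N` that is at least as
large as all others. -/
def maxInsertions (N : ℕ) (M : Multiset ℕ) : Multiset (Multiset ℕ) :=
  (N ::ₘ M) ::ₘ M.map fun v => N ::ₘ N ::ₘ M.erase v

lemma maxInsertions_cons (N v : ℕ) (M : Multiset ℕ) :
    maxInsertions N (v ::ₘ M) = (N ::ₘ N ::ₘ M) ::ₘ (maxInsertions N M).map (v ::ₘ ·) := by
  have herase : M.map (fun x => N ::ₘ N ::ₘ (v ::ₘ M).erase x) =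
      M.map fun x => v ::ₘ N ::ₘ N ::ₘ M.erase x := by
    refine Multiset.map_congr rfl fun x hx => ?_
    rw [Multiset.erase_cons_tail_of_mem hx, Multiset.cons_swap N v, Multiset.cons_swap N v]
  rw [maxInsertions, maxInsertions, Multiset.map_cons, Multiset.map_cons, Multiset.map_map, herase,
    Multiset.erase_cons_head, Multiset.cons_swap, Multiset.cons_swap N v]
  rfl

lemma map_univ_adjMax_insertNth {N : ℕ} (u : Fin (m + 1) → ℕ) (hu : ∀ i, u i ≤ N) :
    (univ.val.map fun p : Fin (m + 1) => adjMax (p.succ.insertNth N u)) =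
      maxInsertions N (adjMax u) := by
  induction m with
  | zero =>
    cases u using Fin.consCases with | _ a u
    simp [adjMax, maxInsertions, show a ≤ N from hu 0]
  | succ m ih =>
    cases u using Fin.consCases with | _ a u
    cases u using Fin.consCases with | _ b u
    have ha : a ≤ N := hu 0
    have hb : b ≤ N := hu 1
    rw [map_univ_fin_succ, adjMax_cons_cons, maxInsertions_cons,
      ← ih (Fin.cons b u) fun i => hu i.succ, Multiset.map_map]
    congr 1
    · rw [Fin.insertNth_succ_cons, Fin.insertNth_zero', adjMax_cons_cons, adjMax_cons_cons,
        max_eq_right ha, max_eq_left hb]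
    · refine Multiset.map_congr rfl fun p _ => ?_
      rw [Fin.insertNth_succ_cons, Fin.insertNth_succ_cons, adjMax_cons_cons,
        Function.comp_apply, Fin.insertNth_succ_cons]

/-- The permutation whose word is that of `e` with the new largest letter inserted at position
`p`. -/
def insertLast (e : Perm (Fin m)) (p : Fin (m + 1)) : Perm (Fin (m + 1)) :=
  ((finSuccEquiv' p).trans (optionCongr e)).trans finSuccEquivLast.symm

@[simp] lemma insertLast_apply_self (e : Perm (Fin m)) (p : Fin (m + 1)) :
    insertLast e p p = Fin.last m := by
  simp [insertLast]

@[simp] lemma insertLast_succAbove (e : Perm (Fin m)) (p : Fin (m + 1)) (i : Fin m) :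
    insertLast e p (p.succAbove i) = (e i).castSucc := by
  simp [insertLast]

lemma insertLast_left_injective (p : Fin (m + 1)) :
    Function.Injective fun e : Perm (Fin m) => insertLast e p := by
  intro e e' h
  ext i
  simpa using congrArg Fin.val (Equiv.congr_fun h (p.succAbove i))

@[simp] lemma insertLast_last_castSucc (e : Perm (Fin m)) (i : Fin m) :
    insertLast e (Fin.last m) i.castSucc = (e i).castSucc := by
  rw [← Fin.succAbove_last_apply, insertLast_succAbove]

/-- The permutation obtained from `e` by inserting the new last element into the cycle of `p`, just
after `p`, or as a fixed point if `p` is itself the last element. -/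
def cycleInsertLast (e : Perm (Fin m)) (p : Fin (m + 1)) : Perm (Fin (m + 1)) :=
  insertLast e (Fin.last m) * swap p (Fin.last m)

lemma cycleInsertLast_apply_self (e : Perm (Fin m)) (p : Fin (m + 1)) :
    cycleInsertLast e p p = Fin.last m := by
  simp [cycleInsertLast]

lemma cycleInsertLast_left_injective (p : Fin (m + 1)) :
    Function.Injective fun e : Perm (Fin m) => cycleInsertLast e p :=
  (mul_left_injective _).comp (insertLast_left_injective (Fin.last m))

lemma bijective_uncurry_of_apply_eq_last {F : Perm (Fin m) → Fin (m + 1) → Perm (Fin (m + 1))}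
    (hF : ∀ e p, F e p p = Fin.last m) (hinj : ∀ p, Function.Injective fun e => F e p) :
    Function.Bijective (Function.uncurry F) := by
  refine (Fintype.bijective_iff_injective_and_card _).2 ⟨fun ⟨e, p⟩ ⟨e', p'⟩ h => ?_, ?_⟩
  · have h : F e p = F e' p' := h
    obtain rfl : p = p' := (F e p).injective <| by rw [hF, h, hF]
    rw [hinj p h]
  · rw [Fintype.card_prod, Fintype.card_perm, Fintype.card_perm, Fintype.card_fin, Fintype.card_fin,
      Nat.factorial_succ, mul_comm]

lemma map_univ_eq_bind_maxInsertions {F : Perm (Fin m) → Fin (m + 1) → Perm (Fin (m + 1))}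
    (hF : ∀ e p, F e p p = Fin.last m) (hinj : ∀ p, Function.Injective fun e => F e p) {T T'}
    (hT : ∀ e, (univ.val.map fun p => T (F e p)) = maxInsertions m (T' e)) :
    univ.val.map T = (univ.val.map T').bind (maxInsertions m) := by
  rw [map_univ_eq_bind_of_equiv (.ofBijective _ (bijective_uncurry_of_apply_eq_last hF hinj)) T,
    Multiset.bind_map]
  exact Multiset.bind_congr fun e _ => hT e

lemma map_univ_wordMax_insertLast (e : Perm (Fin m)) :
    (univ.val.map fun p => wordMax (insertLast e p)) = maxInsertions m (wordMax e) := by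
  rw [wordMax, ← map_univ_adjMax_insertNth]
  · refine Multiset.map_congr rfl fun p _ => congrArg adjMax ?_
    rw [Fin.insertNth_succ_cons]
    exact congrArg (Fin.cons 0)
      (Fin.eq_insertNth_iff.2 ⟨by simp, funext fun i => by simp [Fin.removeNth]⟩)
  · intro i
    cases i using Fin.cases with
    | zero => exact m.zero_le
    | succ i => exact (e i).isLt.le

lemma graphMax_cycleInsertLast_castSucc (e : Perm (Fin m)) (j : Fin m) :
    graphMax (cycleInsertLast e j.castSucc) =
      m ::ₘ m ::ₘ (graphMax e).erase (max (j : ℕ) (e j)) := by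
  rw [graphMax, map_univ_fin_castSucc, graphMax, ← map_univ_update]
  congr 1
  · simp [cycleInsertLast]
  · refine Multiset.map_congr rfl fun i _ => ?_
    rcases eq_or_ne i j with rfl | hij
    · simp [cycleInsertLast]
    · simp [cycleInsertLast, swap_apply_of_ne_of_ne, hij]

lemma map_univ_graphMax_cycleInsertLast (e : Perm (Fin m)) :
    (univ.val.map fun p => graphMax (cycleInsertLast e p)) = maxInsertions m (graphMax e) := by
  rw [map_univ_fin_castSucc, maxInsertions]
  simp only [graphMax_cycleInsertLast_castSucc]
  congr 1
  · simp [cycleInsertLast, graphMax, map_univ_fin_castSucc, -Fin.univ_val_map]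
  · rw [graphMax, Multiset.map_map]
    rfl

lemma map_univ_graphMax (m : ℕ) :
    (univ : Finset (Perm (Fin m))).val.map graphMax =
      (univ : Finset (Perm (Fin m))).val.map wordMax := by
  induction m with
  | zero => rfl
  | succ m ih =>
    rw [map_univ_eq_bind_maxInsertions cycleInsertLast_apply_self cycleInsertLast_left_injective
        map_univ_graphMax_cycleInsertLast, ih,
      map_univ_eq_bind_maxInsertions insertLast_apply_self insertLast_left_injective
        map_univ_wordMax_insertLast]

lemma exists_perm_wordMax_eq_graphMax (m : ℕ) : ∃ σ : Perm (Perm (Fin m)),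
    ∀ w, wordMax (σ w) = graphMax w ∧ sign (σ w) = sign w := by
  obtain ⟨σ, hσ⟩ := exists_perm_forall_eq_of_map_univ_eq <|
    map_univ_prodMk_eq sign (map_univ_graphMax m) (sum_sign_smul_graphMax m)
  exact ⟨σ, fun w => Prod.mk_inj.1 (hσ w)⟩

end Insertion

section OneLine

open Equiv Equiv.Perm

variable {n : ℕ}

@[to_additive sum_Icc_one_eq_sum_fin]
lemma prod_Icc_one_eq_prod_fin {M : Type*} [CommMonoid M] (n : ℕ) (F : ℕ → M) :
    ∏ k ∈ Icc 1 n, F k = ∏ i : Fin n, F (i + 1) := by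
  rw [Fin.prod_univ_eq_prod_range fun i => F (i + 1), range_eq_Ico, prod_Ico_add' F 0 n 1]
  rfl

lemma oneLine_val_add_one (w : Perm (Fin n)) (i : Fin n) : oneLine w (i + 1) = (w i : ℕ) + 1 := by
  simp [oneLine]

lemma apply_zero_eq_zero_iff_oneLine_one (w : Perm (Fin (n + 1))) :
    w 0 = 0 ↔ oneLine w 1 = 1 := by
  simp [oneLine]

lemma neg_one_pow_invNum (w : Perm (Fin n)) : (-1 : ℤ) ^ invNum w = sign w := by
  have hprod : (-1 : ℤ) ^ invNum w = ∏ p ∈ Icc 1 n ×ˢ Icc 1 n,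
      if p.1 < p.2 ∧ oneLine w p.2 < oneLine w p.1 then -1 else 1 := by
    rw [prod_ite, prod_const, prod_const_one, mul_one, invNum]
  rw [hprod, prod_product_right, prod_Icc_one_eq_prod_fin, sign_eq_prod_prod_Iio]
  push_cast
  refine prod_congr rfl fun j _ => ?_
  rw [prod_Icc_one_eq_prod_fin, ← filter_gt_eq_Iio, prod_filter]
  refine prod_congr rfl fun i _ => ?_
  simp only [oneLine_val_add_one, Nat.add_lt_add_iff_right, Fin.val_fin_lt]
  by_cases hij : i < j
  · rcases (w.injective.ne hij.ne).lt_or_gt with h | h <;> simp [hij, h, h.not_gt]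
  · simp [hij]

lemma depthStat_add_sum_val (w : Perm (Fin n)) :
    depthStat w + ∑ i : Fin n, (i : ℕ) = (graphMax w).sum := by
  rw [depthStat, sum_filter, sum_Icc_one_eq_sum_fin, graphMax, ← sum_add_distrib]
  refine sum_congr rfl fun i _ => ?_
  rw [oneLine_val_add_one]
  split_ifs <;> omega

lemma drpStat_add_sum_val (w : Perm (Fin n)) :
    drpStat w + ∑ i : Fin n, (i : ℕ) = (wordMax w).sum := by
  cases n with
  | zero => rfl
  | succ n =>
    rw [wordMax_eq_cons, Multiset.sum_cons, ← Equiv.sum_comp w fun i => (i : ℕ), Fin.sum_univ_succ,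
      add_left_comm, drpStat, sum_filter, Nat.add_sub_cancel, sum_Icc_one_eq_sum_fin, adjMax,
      ← sum_add_distrib]
    refine congrArg _ (sum_congr rfl fun i _ => ?_)
    have hcast := oneLine_val_add_one w i.castSucc
    have hsucc := oneLine_val_add_one w i.succ
    rw [Fin.val_castSucc] at hcast
    rw [Fin.val_succ] at hsucc
    rw [hcast, hsucc]
    split_ifs <;> omega

lemma depthStat_fixZero_eq_drpStat_fixZero {e e' : Perm (Fin n)} (h : wordMax e' = graphMax e) :
    depthStat (fixZero e) = drpStat (fixZero e') := by
  have hsum : (graphMax (fixZero e)).sum = (wordMax (fixZero e')).sum := by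
    rw [graphMax_fixZero, wordMax_fixZero, h]
  rwa [← depthStat_add_sum_val, ← drpStat_add_sum_val, Nat.add_right_cancel_iff] at hsum

end OneLine

/-- on A₁ = {w : w(1) = 1} there is a sign-preserving bijection
carrying depth to drp. -/
theorem stmt13 (n : ℕ) (hn : 0 < n) :
    ∃ Ψ : {w : Equiv.Perm (Fin n) // oneLine w 1 = 1} →
          {w : Equiv.Perm (Fin n) // oneLine w 1 = 1},
      Function.Bijective Ψ ∧
        ∀ w : {w : Equiv.Perm (Fin n) // oneLine w 1 = 1},
          ((-1 : ℤ) ^ invNum (Ψ w).1 = (-1 : ℤ) ^ invNum w.1) ∧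
          depthStat w.1 = drpStat (Ψ w).1 := by
  obtain ⟨m, rfl⟩ := Nat.exists_eq_succ_of_ne_zero hn.ne'
  obtain ⟨σ, hσ⟩ := exists_perm_wordMax_eq_graphMax m
  let L : Equiv.Perm (Fin m) ≃ {w : Equiv.Perm (Fin (m + 1)) // oneLine w 1 = 1} :=
    fixZeroEquiv.trans (Equiv.subtypeEquivRight apply_zero_eq_zero_iff_oneLine_one)
  refine ⟨L.permCongr σ, (L.permCongr σ).bijective, fun w => ?_⟩
  obtain ⟨e, rfl⟩ := L.surjective w
  have hL (e : Equiv.Perm (Fin m)) : (L e).1 = fixZero e := rfl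
  obtain ⟨hmax, hsign⟩ := hσ e
  rw [Equiv.permCongr_apply, Equiv.symm_apply_apply, hL, hL, neg_one_pow_invNum, neg_one_pow_invNum,
    sign_fixZero, sign_fixZero, hsign]
  exact ⟨rfl, depthStat_fixZero_eq_drpStat_fixZero hmax⟩
end
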